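/- arXiv:0907.1295 — 3 statements merged into one kernel-verified Lean document; each statement's English description precedes it below -/
import Mathlib

section
/- Let T : ℕ → ℕ → ℝ satisfy T(n,0) = 0 for all n, T(0,q) = 0 for all q, and, for all n ≥ 1 and q ≥ 1, the recurrence T(n,q) = n + (2/(n(q+1))) · Σ_{j=0}^{n-1} Σ_{k=0}^{q} T(j,k). Then for all n and q, T(n,q) ≤ 2·n·H_q, where H_q is the q-th harmonic number. -/
/-!
Strong induction on `n`. Inserting the bound for all `j < n` into the recurrence, and using
`∑_{j<n} 2j = n(n-1)` and `∑_{k≤q} H_k = (q+1) H_q - q`, gives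
`T(n,q) ≤ n + 2(n-1) H_q - 2(n-1) q/(q+1)`. For `q ≥ 1` one has `2q/(q+1) ≥ 1` and `H_q ≥ 1`, so the
right-hand side is at most `1 + 2(n-1) H_q ≤ 2n H_q`.
-/

/-- The q-th harmonic number `H_q = ∑_{i=1}^{q} 1/i` (with `H_0 = 0`), as a real number. -/
noncomputable def harmonicNum (q : ℕ) : ℝ := ∑ i ∈ Finset.range q, (1 : ℝ) / (i + 1)

lemma harmonicNum_succ (q : ℕ) : harmonicNum (q + 1) = harmonicNum q + 1 / ((q : ℝ) + 1) := by
  simp [harmonicNum, Finset.sum_range_succ]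

lemma one_le_harmonicNum_succ (q : ℕ) : 1 ≤ harmonicNum (q + 1) := by
  induction q with
  | zero => simp [harmonicNum]
  | succ q ih =>
    rw [harmonicNum_succ]
    have : (0 : ℝ) ≤ 1 / (((q + 1 : ℕ) : ℝ) + 1) := by positivity
    linarith

lemma sum_harmonicNum (q : ℕ) :
    ∑ k ∈ Finset.range (q + 1), harmonicNum k = ((q : ℝ) + 1) * harmonicNum q - q := by
  induction q with
  | zero => simp [harmonicNum]
  | succ q ih =>
    rw [Finset.sum_range_succ, ih, harmonicNum_succ]
    have : (q : ℝ) + 1 ≠ 0 := by positivity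
    push_cast
    field_simp
    ring

lemma sum_two_mul_cast (n : ℕ) :
    ∑ j ∈ Finset.range n, 2 * (j : ℝ) = (n : ℝ) * ((n : ℝ) - 1) := by
  induction n with
  | zero => simp
  | succ n ih =>
    rw [Finset.sum_range_succ, ih]
    push_cast
    ring

theorem stmt_0 (T : ℕ → ℕ → ℝ)
    (hT0 : ∀ n, T n 0 = 0)
    (hT0' : ∀ q, T 0 q = 0)
    (hrec : ∀ n q, 1 ≤ n → 1 ≤ q →
      T n q = n + (2 / ((n : ℝ) * ((q : ℝ) + 1))) *
        ∑ j ∈ Finset.range n, ∑ k ∈ Finset.range (q + 1), T j k) :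
    ∀ n q, T n q ≤ 2 * (n : ℝ) * harmonicNum q := by
  intro n
  induction n using Nat.strong_induction_on with
  | _ n ih =>
    intro q
    rcases Nat.eq_zero_or_pos n with rfl | hn
    · simp [hT0']
    rcases Nat.eq_zero_or_pos q with rfl | hq
    · simp [hT0, harmonicNum]
    have hsum : ∑ j ∈ Finset.range n, ∑ k ∈ Finset.range (q + 1), T j k ≤
        (n : ℝ) * ((n : ℝ) - 1) * (((q : ℝ) + 1) * harmonicNum q - q) := by
      rw [← sum_two_mul_cast, ← sum_harmonicNum, Finset.sum_mul_sum]
      exact Finset.sum_le_sum fun j hj => Finset.sum_le_sum fun k _ =>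
        ih j (Finset.mem_range.mp hj) k
    have hn1 : (1 : ℝ) ≤ n := by exact_mod_cast hn
    have hq1 : (1 : ℝ) ≤ q := by exact_mod_cast hq
    have hH : 1 ≤ harmonicNum q := by
      obtain ⟨p, rfl⟩ := Nat.exists_eq_add_of_le' hq
      exact one_le_harmonicNum_succ p
    have hfrac : 1 ≤ 2 * (q : ℝ) / ((q : ℝ) + 1) := by
      rw [le_div_iff₀ (by positivity)]
      linarith
    rw [hrec n q hn hq]
    calc (n : ℝ) + (2 / ((n : ℝ) * ((q : ℝ) + 1))) *
          ∑ j ∈ Finset.range n, ∑ k ∈ Finset.range (q + 1), T j k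
        ≤ n + (2 / ((n : ℝ) * ((q : ℝ) + 1))) *
          ((n : ℝ) * ((n : ℝ) - 1) * (((q : ℝ) + 1) * harmonicNum q - q)) := by gcongr
      _ = n + 2 * ((n : ℝ) - 1) * harmonicNum q
          - ((n : ℝ) - 1) * (2 * (q : ℝ) / ((q : ℝ) + 1)) := by
        field_simp
        ring
      _ ≤ 2 * (n : ℝ) * harmonicNum q := by
        have := mul_le_mul_of_nonneg_left hfrac (sub_nonneg.mpr hn1)
        linarith
end

section
/- Let α be a linear order, let A : Fin n → α be injective, and let B : Fin n → Bool satisfy the bit-vector invariant with respect to A. Let ℓ, r, and k be indices with ℓ < k < r, B ℓ = true, and B r = true. Then there exists an index j with ℓ < j < r such that the number of indices i with A i < A j equals k; that is, the element of rank k lies at a position strictly between ℓ and r. -/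
/-!
Counting smaller entries defines a rank map `Fin n → Fin n`. It preserves and reflects strict
order of values, so for injective `A` it is injective, hence surjective by finiteness: some `j`
has rank `k`. At a position `p` satisfying the invariant, the entries below `A p` are exactly
those at positions before `p`, so its rank is `p`. Since the rank of `j` lies strictly between
the ranks `ℓ` and `r` of the two marked positions, `A ℓ < A j < A r`, and the invariant turns
these comparisons of values into `ℓ < j < r`.
-/

/-- The rank of the entry at position `j`: the number of entries strictly smaller than it. -/
def rankOf {n : ℕ} {α : Type*} [LinearOrder α] (A : Fin n → α) (j : Fin n) : ℕ :=
  (Finset.univ.filter (fun i : Fin n => A i < A j)).card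

theorem rankOf_lt {n : ℕ} {α : Type*} [LinearOrder α] (A : Fin n → α) (j : Fin n) :
    rankOf A j < n := by
  have h : (Finset.univ.filter (fun i : Fin n => A i < A j)).card
      < (Finset.univ : Finset (Fin n)).card :=
    Finset.card_lt_card (Finset.filter_ssubset.2 ⟨j, Finset.mem_univ j, lt_irrefl _⟩)
  simpa [rankOf] using h

theorem rankOf_mono {n : ℕ} {α : Type*} [LinearOrder α] (A : Fin n → α) {a b : Fin n}
    (h : A a ≤ A b) : rankOf A a ≤ rankOf A b :=
  Finset.card_le_card
    (Finset.monotone_filter_right _ fun _ _ hi => lt_of_lt_of_le hi h)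

theorem rankOf_strictMono {n : ℕ} {α : Type*} [LinearOrder α] (A : Fin n → α) {a b : Fin n}
    (h : A a < A b) : rankOf A a < rankOf A b := by
  refine Finset.card_lt_card ((Finset.ssubset_iff_of_subset
    (Finset.monotone_filter_right _ fun _ _ hi => lt_trans hi h)).2 ⟨a, ?_, ?_⟩)
  · simpa using h
  · simp

theorem exists_rankOf_eq {n : ℕ} {α : Type*} [LinearOrder α] (A : Fin n → α)
    (hA : Function.Injective A) (k : Fin n) : ∃ j, rankOf A j = k := by
  have hinj : Function.Injective (fun j => (⟨rankOf A j, rankOf_lt A j⟩ : Fin n)) := by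
    intro a b hab
    have hab' : rankOf A a = rankOf A b := congrArg Fin.val hab
    rcases lt_trichotomy (A a) (A b) with h | h | h
    · exact absurd hab' (rankOf_strictMono A h).ne
    · exact hA h
    · exact absurd hab' (rankOf_strictMono A h).ne'
  obtain ⟨j, hj⟩ := Finite.surjective_of_injective hinj k
  exact ⟨j, congrArg Fin.val hj⟩

/-- Under the invariant at `p`, comparing values with `A p` is comparing positions with `p`. -/
theorem lt_pivot_iff {n : ℕ} {α : Type*} [LinearOrder α] {A : Fin n → α} {p : Fin n}
    (hp : ∀ j : Fin n, (j < p → A j < A p) ∧ (p < j → A p < A j)) (j : Fin n) :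
    A j < A p ↔ j < p := by
  refine ⟨fun h => ?_, (hp j).1⟩
  rcases lt_trichotomy j p with hj | rfl | hj
  · exact hj
  · exact absurd h (lt_irrefl _)
  · exact absurd h ((hp j).2 hj).not_gt

theorem rankOf_pivot {n : ℕ} {α : Type*} [LinearOrder α] {A : Fin n → α} {p : Fin n}
    (hp : ∀ j : Fin n, (j < p → A j < A p) ∧ (p < j → A p < A j)) :
    rankOf A p = p := by
  have h : Finset.univ.filter (fun i : Fin n => A i < A p) = Finset.Iio p := by
    ext i
    simp [lt_pivot_iff hp]
  rw [rankOf, h, Fin.card_Iio]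

theorem stmt_7 {n : ℕ} {α : Type*} [LinearOrder α]
    (A : Fin n → α) (hA : Function.Injective A) (B : Fin n → Bool)
    (hinv : ∀ i : Fin n, B i = true →
      ∀ j : Fin n, (j < i → A j < A i) ∧ (i < j → A i < A j))
    (ℓ r k : Fin n) (hlk : ℓ < k) (hkr : k < r)
    (hBl : B ℓ = true) (hBr : B r = true) :
    ∃ j : Fin n, ℓ < j ∧ j < r ∧
      (Finset.univ.filter (fun i : Fin n => A i < A j)).card = (k : ℕ) := by
  obtain ⟨j, hj⟩ := exists_rankOf_eq A hA k
  have hℓ := rankOf_pivot (hinv ℓ hBl)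
  have hr := rankOf_pivot (hinv r hBr)
  have hℓj : A ℓ < A j := by
    by_contra! h
    have := rankOf_mono A h
    omega
  have hjr : A j < A r := by
    by_contra! h
    have := rankOf_mono A h
    omega
  refine ⟨j, ?_, (lt_pivot_iff (hinv r hBr) j).1 hjr, hj⟩
  by_contra! h
  rcases h.lt_or_eq with h | rfl
  · exact hℓj.not_gt ((hinv ℓ hBl j).1 h)
  · exact lt_irrefl _ hℓj
end

section
/- Let α be a linear order, let A : Fin n → α be injective, and let B : Fin n → Bool satisfy the bit-vector invariant with respect to A. Let ℓ < r be indices with B ℓ = true, B r = true, and B i = false for all i with ℓ < i < r. Let A' : Fin n → α be injective with A' i = A i for every index i with i ≤ ℓ or i ≥ r, and suppose the multiset of values {A' i : ℓ < i < r} equals the multiset {A i : ℓ < i < r}. Suppose there is an index p with ℓ < p < r such that A' i < A' p for all i with ℓ < i < p, and A' i > A' p for all i with p < i < r. Define B' : Fin n → Bool by B' p = true and B' i = B i for i ≠ p. Then B' satisfies the bit-vector invariant with respect to A'. -/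
/-!
A position `i` whose old bit is set lies outside the open interval `(ℓ, r)`, and so compares in the
same way with every position of that interval. Since the values inside are merely rearranged,
`A' j` for `ℓ < j < r` is `A k` for some `ℓ < k < r`, and the old invariant at `i` applied to `k`
gives the new one at `i` against `j`. At the new pivot `p`, positions inside the interval are
handled by the partition property; those outside are separated from `A' p` by `A ℓ` or `A r`.
-/

theorem stmt_8 {n : ℕ} {α : Type*} [LinearOrder α]
    (A A' : Fin n → α) (hA : Function.Injective A) (hA' : Function.Injective A')
    (B : Fin n → Bool)
    (hinv : ∀ i : Fin n, B i = true →
      ∀ j : Fin n, (j < i → A j < A i) ∧ (i < j → A i < A j))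
    (ℓ r : Fin n) (hlr : ℓ < r) (hBl : B ℓ = true) (hBr : B r = true)
    (hmid : ∀ i : Fin n, ℓ < i → i < r → B i = false)
    (hout : ∀ i : Fin n, i ≤ ℓ ∨ r ≤ i → A' i = A i)
    (hperm : ((Finset.univ.filter (fun i : Fin n => ℓ < i ∧ i < r)).val.map A')
           = ((Finset.univ.filter (fun i : Fin n => ℓ < i ∧ i < r)).val.map A))
    (p : Fin n) (hlp : ℓ < p) (hpr : p < r)
    (hpleft : ∀ i : Fin n, ℓ < i → i < p → A' i < A' p)
    (hpright : ∀ i : Fin n, p < i → i < r → A' p < A' i)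
    (B' : Fin n → Bool) (hB'p : B' p = true)
    (hB' : ∀ i : Fin n, i ≠ p → B' i = B i) :
    ∀ i : Fin n, B' i = true →
      ∀ j : Fin n, (j < i → A' j < A' i) ∧ (i < j → A' i < A' j) := by
  have key : ∀ j : Fin n, ℓ < j → j < r → ∃ k : Fin n, ℓ < k ∧ k < r ∧ A k = A' j := by
    intro j hj hj'
    have h : A' j ∈ (Finset.univ.filter (fun i : Fin n => ℓ < i ∧ i < r)).val.map A' :=
      Multiset.mem_map_of_mem A' (by simp [hj, hj'])
    rw [hperm] at h
    obtain ⟨k, hk, hkj⟩ := Multiset.mem_map.mp h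
    have hk' : ℓ < k ∧ k < r := by simpa using hk
    exact ⟨k, hk'.1, hk'.2, hkj⟩
  -- The old invariant transfers to `A'` at every position whose old bit is set, including `ℓ`, `r`.
  have old : ∀ i : Fin n, B i = true →
      ∀ j : Fin n, (j < i → A' j < A' i) ∧ (i < j → A' i < A' j) := by
    intro i hi j
    have hi' : i ≤ ℓ ∨ r ≤ i := by
      by_contra! h
      simp [hmid i h.1 h.2] at hi
    rw [hout i hi']
    by_cases hj : ℓ < j ∧ j < r
    · obtain ⟨k, hk, hk', hkj⟩ := key j hj.1 hj.2
      rw [← hkj]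
      have := hinv i hi k
      exact ⟨fun h => this.1 (by omega), fun h => this.2 (by omega)⟩
    · rw [hout j (by omega)]
      exact hinv i hi j
  intro i hi j
  by_cases hip : i = p
  · subst hip
    constructor
    · intro hj
      rcases lt_trichotomy ℓ j with h | rfl | h
      · exact hpleft j h hj
      · exact (old _ hBl i).2 hlp
      · exact ((old ℓ hBl j).1 h).trans ((old ℓ hBl i).2 hlp)
    · intro hj
      rcases lt_trichotomy j r with h | rfl | h
      · exact hpright j hj h
      · exact (old _ hBr i).1 hpr
      · exact ((old r hBr i).1 hpr).trans ((old r hBr j).2 h)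
  · exact old i (hB' i hip ▸ hi) j
end
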